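/- (Lemma 1) A hybrid logic formula φ is valid (true at every world of every model) if and only if φ is valid over the class of named models, i.e., M ⊨ φ for every named model M. -/

import Mathlib

/-- Hybrid logic formulas over nominals `ℕ` and propositional variables `ℕ`
(the two sorts are kept disjoint by the constructors). -/
inductive Form : Type where
  | prop : ℕ → Form
  | nom : ℕ → Form
  | rel : ℕ → ℕ → Form
  | and : Form → Form → Form
  | or : Form → Form → Form
  | imp : Form → Form → Form
  | neg : Form → Form
  | at_ : ℕ → Form → Form
  | box : Form → Form
  | dia : Form → Form

/-- A model for hybrid logic: a nonempty set of worlds, an accessibility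
relation, a valuation and an assignment of nominals to worlds. -/
structure Model where
  W : Type
  ne : Nonempty W
  R : W → W → Prop
  V : ℕ → W → Prop
  g : ℕ → W

/-- Satisfaction of a formula at a world of a model. -/
def sat (M : Model) : M.W → Form → Prop
  | w, .prop p => M.V p w
  | w, .nom i => M.g i = w
  | _, .rel i j => M.R (M.g i) (M.g j)
  | w, .and φ ψ => sat M w φ ∧ sat M w ψ
  | w, .or φ ψ => sat M w φ ∨ sat M w ψ
  | w, .imp φ ψ => ¬ sat M w φ ∨ sat M w ψ
  | w, .neg φ => ¬ sat M w φ
  | _, .at_ i φ => sat M (M.g i) φ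
  | w, .box φ => ∀ v, M.R w v → sat M v φ
  | w, .dia φ => ∃ v, M.R w v ∧ sat M v φ

/-- A model is named iff every world has a name, i.e. the assignment is surjective. -/
def Model.Named (M : Model) : Prop := Function.Surjective M.g

/-- A formula is valid iff it is true at every world of every model. -/
def Valid (φ : Form) : Prop := ∀ (M : Model) (w : M.W), sat M w φ

/-- Formulas for which witnessing successors are needed. -/
def wit : Form → Set Form
  | .prop _ => ∅
  | .nom _ => ∅
  | .rel _ _ => ∅
  | .and φ ψ => wit φ ∪ wit ψ
  | .or φ ψ => wit φ ∪ wit ψ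
  | .imp φ ψ => wit φ ∪ wit ψ
  | .neg φ => wit φ
  | .at_ _ φ => wit φ
  | .box φ => insert (.neg φ) (wit φ)
  | .dia φ => insert φ (wit φ)

/-- A strict upper bound on the nominals occurring in a formula. -/
def nomBound : Form → ℕ
  | .prop _ => 0
  | .nom i => i + 1
  | .rel i j => max (i + 1) (j + 1)
  | .and φ ψ => max (nomBound φ) (nomBound ψ)
  | .or φ ψ => max (nomBound φ) (nomBound ψ)
  | .imp φ ψ => max (nomBound φ) (nomBound ψ)
  | .neg φ => nomBound φ
  | .at_ i φ => max (i + 1) (nomBound φ)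
  | .box φ => nomBound φ
  | .dia φ => nomBound φ

theorem wit_countable (φ : Form) : (wit φ).Countable := by
  induction φ with
  | prop | nom | rel => exact Set.countable_empty
  | and _ _ h1 h2 | or _ _ h1 h2 | imp _ _ h1 h2 => exact h1.union h2
  | neg _ h | at_ _ _ h => exact h
  | box _ h | dia _ h => exact h.insert _

theorem truth_lemma (M : Model) (S : Set M.W) (hne : Nonempty S) (T : Set Form) (B : ℕ)
    (g' : ℕ → S) (hg : ∀ n < B, (g' n : M.W) = M.g n)
    (hS : ∀ u ∈ S, ∀ ψ ∈ T, (∃ v, M.R u v ∧ sat M v ψ) → ∃ v ∈ S, M.R u v ∧ sat M v ψ)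
    (ψ : Form) : wit ψ ⊆ T → nomBound ψ ≤ B → ∀ u : S,
      (sat ⟨S, hne, fun a b => M.R a b, fun p a => M.V p a, g'⟩ u ψ ↔ sat M u.1 ψ) := by
  induction ψ with
  | prop p => intro _ _ u; simp [sat]
  | nom i =>
    intro _ hb u
    simp only [nomBound] at hb
    simp only [sat, ← hg i (by omega)]
    exact Subtype.ext_iff
  | rel i j =>
    intro _ hb u
    simp only [nomBound] at hb
    simp only [sat, ← hg i (by omega), ← hg j (by omega)]
  | and a b ha hb | or a b ha hb | imp a b ha hb =>
    intro hw hB u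
    simp only [nomBound, wit, Set.union_subset_iff] at hw hB
    simp only [sat]
    rw [ha hw.1 (by omega) u, hb hw.2 (by omega) u]
  | neg a ha =>
    intro hw hB u
    simp only [sat]
    rw [ha hw hB u]
  | at_ i a ha =>
    intro hw hB u
    simp only [nomBound, wit] at hw hB
    simp only [sat, ← hg i (by omega)]
    exact ha hw (by omega) (g' i)
  | box a ha =>
    intro hw hB u
    simp only [nomBound, wit, Set.insert_subset_iff] at hw hB
    simp only [sat]
    constructor
    · intro h
      by_contra hc
      push Not at hc
      obtain ⟨v, hv, hr, hs⟩ := hS u.1 u.2 _ hw.1 hc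
      exact hs ((ha hw.2 hB ⟨v, hv⟩).1 (h ⟨v, hv⟩ hr))
    · intro h v hr
      exact (ha hw.2 hB v).2 (h v hr)
  | dia a ha =>
    intro hw hB u
    simp only [nomBound, wit, Set.insert_subset_iff] at hw hB
    simp only [sat]
    constructor
    · rintro ⟨v, hr, hs⟩
      exact ⟨v, hr, (ha hw.2 hB v).1 hs⟩
    · intro h
      obtain ⟨v, hv, hr, hs⟩ := hS u.1 u.2 _ hw.1 h
      exact ⟨⟨v, hv⟩, hr, (ha hw.2 hB ⟨v, hv⟩).2 hs⟩

theorem exists_countable (M : Model) (w : M.W) (T : Set Form) (hT : T.Countable) :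
    ∃ S : Set M.W, S.Countable ∧ w ∈ S ∧ (∀ n, M.g n ∈ S) ∧
      ∀ u ∈ S, ∀ ψ ∈ T, (∃ v, M.R u v ∧ sat M v ψ) → ∃ v ∈ S, M.R u v ∧ sat M v ψ := by
  have hf : ∀ (u : M.W) (ψ : Form), ∃ v, (∃ v, M.R u v ∧ sat M v ψ) → M.R u v ∧ sat M v ψ := by
    intro u ψ
    by_cases h : ∃ v, M.R u v ∧ sat M v ψ
    · exact ⟨h.choose, fun _ => h.choose_spec⟩
    · exact ⟨u, fun h' => absurd h' h⟩
  choose f hf using hf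
  have := hT.to_subtype
  refine ⟨Set.range (fun x : List T × Option ℕ =>
    x.1.foldr (fun ψ u => f u ψ.1) (x.2.elim w M.g)), Set.countable_range _,
    ⟨([], none), rfl⟩, fun n => ⟨([], some n), rfl⟩, ?_⟩
  rintro _ ⟨⟨l, o⟩, rfl⟩ ψ hψ h
  exact ⟨_, ⟨(⟨ψ, hψ⟩ :: l, o), rfl⟩, hf _ ψ h⟩

/-- (Lemma 1) A formula is valid iff it is valid over the class of named models. -/
theorem valid_iff_valid_over_named (φ : Form) :
    Valid φ ↔ ∀ M : Model, M.Named → ∀ w : M.W, sat M w φ := by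
  constructor
  · intro h M _ w
    exact h M w
  · intro h M w
    obtain ⟨S, hc, hw, hgS, hS⟩ := exists_countable M w (wit φ) (wit_countable φ)
    have hne : Nonempty S := ⟨⟨w, hw⟩⟩
    have := hc.to_subtype
    obtain ⟨e, he⟩ := exists_surjective_nat S
    let g' : ℕ → S := fun n => if n < nomBound φ then ⟨M.g n, hgS n⟩ else e (n - nomBound φ)
    have key := truth_lemma M S hne (wit φ) (nomBound φ) g'
      (fun n hn => by simp [g', hn]) hS φ subset_rfl le_rfl ⟨w, hw⟩
    refine key.1 (h _ ?_ _)
    intro s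
    obtain ⟨n, rfl⟩ := he s
    exact ⟨n + nomBound φ, by simp [g']⟩
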